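/- Let E_1, …, E_m, F be Banach spaces and q_1, …, q_m ∈ [1, ∞). If every continuous m-linear map from E_1 × ⋯ × E_m into F is absolutely (1; q_1, …, q_m)-summing, then for any n > m and any Banach spaces E_{m+1}, …, E_n, every continuous n-linear map from E_1 × ⋯ × E_n into F is absolutely (1; q_1, …, q_m, 1, …, 1)-summing. -/

import Mathlib

open MeasureTheory

/-- Weak `ℓ_q` norm of a finite family in a normed space. -/
noncomputable def weakLpNorm (𝕜 : Type*) [RCLike 𝕜] {E : Type*} [NormedAddCommGroup E]
    [NormedSpace 𝕜 E] (q : ℝ) {m : ℕ} (x : Fin m → E) : ℝ :=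
  ⨆ φ : {φ : E →L[𝕜] 𝕜 // ‖φ‖ ≤ 1}, (∑ j, ‖φ.1 (x j)‖ ^ q) ^ (1 / q)

/-- `T` satisfies the `p`-semi-integral inequality with constant `C`, witnessed by a regular
Borel probability measure on the product of the closed dual unit balls with their
weak-star topologies. -/
def SemiIntegralWith (𝕜 : Type*) [RCLike 𝕜] {ι : Type*} [Fintype ι] {E : ι → Type*}
    [∀ i, NormedAddCommGroup (E i)] [∀ i, NormedSpace 𝕜 (E i)]
    {F : Type*} [NormedAddCommGroup F]
    (p C : ℝ) (T : (∀ i, E i) → F) : Prop :=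
  letI : MeasurableSpace (∀ i, {φ : WeakDual 𝕜 (E i) // ∀ z, ‖φ z‖ ≤ ‖z‖}) := borel _
  ∃ μ : Measure (∀ i, {φ : WeakDual 𝕜 (E i) // ∀ z, ‖φ z‖ ≤ ‖z‖}),
    IsProbabilityMeasure μ ∧ μ.Regular ∧
      ∀ x : ∀ i, E i,
        ‖T x‖ ≤ C * (∫ φ, ∏ i, ‖(φ i).1 (x i)‖ ^ p ∂μ) ^ (1 / p)

/-- The `si,p` norm: infimum of admissible constants. -/
noncomputable def siNorm (𝕜 : Type*) [RCLike 𝕜] {ι : Type*} [Fintype ι] {E : ι → Type*}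
    [∀ i, NormedAddCommGroup (E i)] [∀ i, NormedSpace 𝕜 (E i)]
    {F : Type*} [NormedAddCommGroup F]
    (p : ℝ) (T : (∀ i, E i) → F) : ℝ :=
  sInf {C : ℝ | 0 ≤ C ∧ SemiIntegralWith 𝕜 p C T}

/-- `T` is absolutely `(p; q₁,…,qₙ)`-summing with constant `C`. -/
def AbsSummingWith (𝕜 : Type*) [RCLike 𝕜] {ι : Type*} [Fintype ι] {E : ι → Type*}
    [∀ i, NormedAddCommGroup (E i)] [∀ i, NormedSpace 𝕜 (E i)]
    {F : Type*} [NormedAddCommGroup F]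
    (p : ℝ) (q : ι → ℝ) (C : ℝ) (T : (∀ i, E i) → F) : Prop :=
  ∀ (m : ℕ) (x : ∀ i, Fin m → E i),
    (∑ j, ‖T (fun i => x i j)‖ ^ p) ^ (1 / p) ≤ C * ∏ i, weakLpNorm 𝕜 (q i) (x i)

/-- `T` is `p`-dominated with constant `C`, witnessed by regular Borel probability measures
on the closed dual unit balls with their weak-star topologies. -/
def DominatedWith (𝕜 : Type*) [RCLike 𝕜] {ι : Type*} [Fintype ι] {E : ι → Type*}
    [∀ i, NormedAddCommGroup (E i)] [∀ i, NormedSpace 𝕜 (E i)]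
    {F : Type*} [NormedAddCommGroup F]
    (p C : ℝ) (T : (∀ i, E i) → F) : Prop :=
  letI : ∀ i, MeasurableSpace {φ : WeakDual 𝕜 (E i) // ∀ z, ‖φ z‖ ≤ ‖z‖} := fun i => borel _
  ∃ μ : ∀ i, Measure {φ : WeakDual 𝕜 (E i) // ∀ z, ‖φ z‖ ≤ ‖z‖},
    (∀ i, IsProbabilityMeasure (μ i)) ∧ (∀ i, (μ i).Regular) ∧
      ∀ x : ∀ i, E i,
        ‖T x‖ ≤ C * ∏ i, (∫ φ, ‖φ.1 (x i)‖ ^ p ∂(μ i)) ^ (1 / p)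

/-- `E` is an `𝓛_∞`-space. -/
def IsLinftySpace (𝕜 : Type*) [RCLike 𝕜] (E : Type*) [NormedAddCommGroup E]
    [NormedSpace 𝕜 E] : Prop :=
  ∃ lam : ℝ, 1 ≤ lam ∧ ∀ M : Submodule 𝕜 E, FiniteDimensional 𝕜 M →
    ∃ N : Submodule 𝕜 E, M ≤ N ∧ FiniteDimensional 𝕜 N ∧
      ∃ v : N ≃L[𝕜] (Fin (Module.finrank 𝕜 N) → 𝕜),
        ‖(v : N →L[𝕜] (Fin (Module.finrank 𝕜 N) → 𝕜))‖ *
          ‖(v.symm : (Fin (Module.finrank 𝕜 N) → 𝕜) →L[𝕜] N)‖ ≤ lam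

/-- `F` has cotype `q`. -/
def HasCotype (q : ℝ) (F : Type*) [NormedAddCommGroup F] : Prop :=
  ∃ C : ℝ, 0 ≤ C ∧ ∀ (m : ℕ) (x : Fin m → F),
    (∑ j, ‖x j‖ ^ q) ^ (1 / q) ≤
      C * ((∑ ε : Fin m → Bool, ‖∑ j, (if ε j then x j else -x j)‖ ^ (2 : ℝ)) / 2 ^ m)
        ^ ((1 : ℝ) / 2)

universe u v

theorem weakLpNorm_nonneg' (𝕜 : Type*) [RCLike 𝕜] {E : Type*} [NormedAddCommGroup E]
    [NormedSpace 𝕜 E] (q : ℝ) {m : ℕ} (x : Fin m → E) : 0 ≤ weakLpNorm 𝕜 q x := by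
  unfold weakLpNorm
  exact Real.iSup_nonneg fun φ => by positivity

/-- the sign attached to a boolean -/
def bsign (𝕜 : Type*) [RCLike 𝕜] (b : Bool) : 𝕜 := if b then 1 else -1

theorem norm_bsign (𝕜 : Type*) [RCLike 𝕜] (b : Bool) : ‖bsign 𝕜 b‖ = 1 := by
  cases b <;> simp [bsign]

theorem bsign_not (𝕜 : Type*) [RCLike 𝕜] (b : Bool) : bsign 𝕜 (!b) = - bsign 𝕜 b := by
  cases b <;> simp [bsign]

theorem bsign_mul_self (𝕜 : Type*) [RCLike 𝕜] (b : Bool) : bsign 𝕜 b * bsign 𝕜 b = 1 := by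
  cases b <;> simp [bsign]

theorem sum_bsign (𝕜 : Type*) [RCLike 𝕜] {N : ℕ} (j i : Fin N) :
    ∑ ε : Fin N → Bool, bsign 𝕜 (ε j) * bsign 𝕜 (ε i) = if i = j then (2 : 𝕜) ^ N else 0 := by
  split_ifs with h
  · subst h
    simp [bsign_mul_self]
  · refine Finset.sum_involution (fun ε _ => Function.update ε i (!(ε i))) ?_ ?_ ?_ ?_
    · intro ε _
      rw [Function.update_of_ne (Ne.symm h), Function.update_self, bsign_not]
      ring
    · intro ε _ _ he
      have := congrFun he i
      simp at this
    · intro ε _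
      simp
    · intro ε _
      simp

theorem sum_bsign_smul (𝕜 : Type*) [RCLike 𝕜] {E : Type*} [NormedAddCommGroup E]
    [NormedSpace 𝕜 E] {N : ℕ} (y : Fin N → E) (j : Fin N) :
    ∑ ε : Fin N → Bool, bsign 𝕜 (ε j) • ∑ i, bsign 𝕜 (ε i) • y i = (2 : 𝕜) ^ N • y j := by
  simp only [Finset.smul_sum, smul_smul]
  rw [Finset.sum_comm]
  simp only [← Finset.sum_smul, sum_bsign]
  simp

theorem norm_bsign_sum_le (𝕜 : Type*) [RCLike 𝕜] {E : Type*} [NormedAddCommGroup E]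
    [NormedSpace 𝕜 E] {N : ℕ} (y : Fin N → E) (ε : Fin N → Bool) :
    ‖∑ i, bsign 𝕜 (ε i) • y i‖ ≤ weakLpNorm 𝕜 1 y := by
  obtain ⟨φ, hφ, h⟩ := exists_dual_vector'' 𝕜 (∑ i, bsign 𝕜 (ε i) • y i)
  have h1 : ‖∑ i, bsign 𝕜 (ε i) • y i‖ ≤ ∑ i, ‖φ (y i)‖ := by
    calc ‖∑ i, bsign 𝕜 (ε i) • y i‖ = ‖φ (∑ i, bsign 𝕜 (ε i) • y i)‖ := by
          rw [h]; simp
      _ = ‖∑ i, bsign 𝕜 (ε i) • φ (y i)‖ := by simp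
      _ ≤ ∑ i, ‖bsign 𝕜 (ε i) • φ (y i)‖ := norm_sum_le _ _
      _ = ∑ i, ‖φ (y i)‖ := by simp [norm_smul, norm_bsign]
  refine h1.trans ?_
  unfold weakLpNorm
  simp only [Real.rpow_one, div_one]
  refine le_ciSup (f := fun φ : {φ : E →L[𝕜] 𝕜 // ‖φ‖ ≤ 1} => ∑ i, ‖φ.1 (y i)‖) ?_ ⟨φ, hφ⟩
  refine ⟨∑ i, ‖y i‖, ?_⟩
  rintro _ ⟨ψ, rfl⟩
  refine Finset.sum_le_sum fun i _ => ?_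
  refine (ψ.1.le_opNorm _).trans ?_
  exact mul_le_of_le_one_left (norm_nonneg _) ψ.2

/-- Uniform constant, from the Banach-Steinhaus theorem. -/
theorem uniform_summing {𝕜 : Type*} [RCLike 𝕜] {ι : Type*} [Fintype ι]
    {E : ι → Type*} [∀ i, NormedAddCommGroup (E i)] [∀ i, NormedSpace 𝕜 (E i)]
    {F : Type*} [NormedAddCommGroup F] [NormedSpace 𝕜 F] [CompleteSpace F]
    {q : ι → ℝ}
    (H : ∀ T : ContinuousMultilinearMap 𝕜 E F, ∃ C, 0 ≤ C ∧ AbsSummingWith 𝕜 1 q C ⇑T) :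
    ∃ K, 0 ≤ K ∧ ∀ (T : ContinuousMultilinearMap 𝕜 E F) (N : ℕ) (x : ∀ i, Fin N → E i),
      ∑ j, ‖T (fun i => x i j)‖ ≤ K * ‖T‖ * ∏ i, weakLpNorm 𝕜 (q i) (x i) := by
  classical
  have H' : ∀ T : ContinuousMultilinearMap 𝕜 E F, ∃ C, 0 ≤ C ∧
      ∀ (N : ℕ) (x : ∀ i, Fin N → E i),
      ∑ j, ‖T (fun i => x i j)‖ ≤ C * ∏ i, weakLpNorm 𝕜 (q i) (x i) := by
    intro T
    obtain ⟨C, hC, h⟩ := H T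
    refine ⟨C, hC, fun N x => ?_⟩
    simpa using h N x
  let I := Σ N : ℕ, (∀ i, Fin N → E i) × (Fin N → {φ : F →L[𝕜] 𝕜 // ‖φ‖ ≤ 1})
  let P : I → ℝ := fun a => ∏ i, weakLpNorm 𝕜 (q i) (a.2.1 i)
  have hP : ∀ a, 0 ≤ P a := fun a => Finset.prod_nonneg fun i _ => weakLpNorm_nonneg' _ _ _
  let g : I → (ContinuousMultilinearMap 𝕜 E F →L[𝕜] 𝕜) := fun a =>
    (((P a)⁻¹ : ℝ) : 𝕜) • ∑ j, (a.2.2 j).1 ∘L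
      (ContinuousMultilinearMap.apply 𝕜 E F (fun i => a.2.1 i j))
  have hg : ∀ a T, g a T = (((P a)⁻¹ : ℝ) : 𝕜) *
      ∑ j, (a.2.2 j).1 (T (fun i => a.2.1 i j)) := by
    intro a T
    simp [g]
  obtain ⟨K, hK⟩ := banach_steinhaus (g := g) (by
    intro T
    obtain ⟨C, hC, h⟩ := H' T
    refine ⟨C, fun a => ?_⟩
    rw [hg, norm_mul, RCLike.norm_ofReal, abs_of_nonneg (inv_nonneg.2 (hP a))]
    have h1 : ‖∑ j, (a.2.2 j).1 (T (fun i => a.2.1 i j))‖ ≤ C * P a := by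
      refine (norm_sum_le _ _).trans (le_trans (Finset.sum_le_sum fun j _ => ?_) (h a.1 a.2.1))
      refine ((a.2.2 j).1.le_opNorm _).trans ?_
      exact mul_le_of_le_one_left (norm_nonneg _) (a.2.2 j).2
    rcases (hP a).eq_or_lt with h0 | h0
    · rw [← h0]; simpa using hC
    · rw [inv_mul_le_iff₀ h0, mul_comm]; exact h1)
  refine ⟨max K 0, le_max_right _ _, fun T N x => ?_⟩
  have hex : ∀ j, ∃ φ : {φ : F →L[𝕜] 𝕜 // ‖φ‖ ≤ 1},
      φ.1 (T (fun i => x i j)) = ((‖T (fun i => x i j)‖ : ℝ) : 𝕜) := by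
    intro j
    obtain ⟨φ, h1, h2⟩ := exists_dual_vector'' 𝕜 (T (fun i => x i j))
    exact ⟨⟨φ, h1⟩, h2⟩
  choose φ hφ using hex
  let a : I := ⟨N, x, φ⟩
  have hPa : P a = ∏ i, weakLpNorm 𝕜 (q i) (x i) := rfl
  have h1 : ‖g a T‖ ≤ max K 0 * ‖T‖ :=
    ((g a).le_opNorm T).trans
      (mul_le_mul_of_nonneg_right ((hK a).trans (le_max_left _ _)) (norm_nonneg _))
  have h2 : ∑ j, (a.2.2 j).1 (T (fun i => a.2.1 i j))
      = ((∑ j, ‖T (fun i => x i j)‖ : ℝ) : 𝕜) := by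
    rw [RCLike.ofReal_sum]
    exact Finset.sum_congr rfl fun j _ => hφ j
  rw [hg, h2, norm_mul, RCLike.norm_ofReal, RCLike.norm_ofReal,
    abs_of_nonneg (inv_nonneg.2 (hP a)),
    abs_of_nonneg (Finset.sum_nonneg fun j _ => norm_nonneg _)] at h1
  rw [← hPa]
  rcases (hP a).eq_or_lt with h0 | h0
  · obtain ⟨C, hC, h⟩ := H' T
    have := h N x
    rw [← hPa, ← h0] at this
    rw [← h0]
    simpa using this
  · rwa [inv_mul_le_iff₀ h0, mul_comm] at h1

/-- Combine two families. -/
def comb {ι κ : Type*} {V : ι ⊕ κ → Type*} (x : ∀ i, V (Sum.inl i)) (y : ∀ l, V (Sum.inr l)) :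
    ∀ s, V s
  | Sum.inl i => x i
  | Sum.inr l => y l

theorem comb_update_inl {ι κ : Type*} [DecidableEq ι] [DecidableEq (ι ⊕ κ)]
    {V : ι ⊕ κ → Type*} (x : ∀ i, V (Sum.inl i)) (y : ∀ l, V (Sum.inr l)) (i : ι)
    (a : V (Sum.inl i)) :
    comb (Function.update x i a) y = Function.update (comb x y) (Sum.inl i) a := by
  funext s
  rcases s with s | s
  · by_cases h : s = i
    · subst h; simp [comb]
    · rw [Function.update_of_ne (by simpa using h)]
      simp [comb, h]
  · rw [Function.update_of_ne (by simp)]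
    rfl

theorem comb_update_inr {ι κ : Type*} [DecidableEq κ] [DecidableEq (ι ⊕ κ)]
    {V : ι ⊕ κ → Type*} (x : ∀ i, V (Sum.inl i)) (y : ∀ l, V (Sum.inr l)) (i : κ)
    (a : V (Sum.inr i)) :
    comb x (Function.update y i a) = Function.update (comb x y) (Sum.inr i) a := by
  funext s
  rcases s with s | s
  · rw [Function.update_of_ne (by simp)]
    rfl
  · by_cases h : s = i
    · subst h; simp [comb]
    · rw [Function.update_of_ne (by simpa using h)]
      simp [comb, h]

section
variable {𝕜 : Type*} [RCLike 𝕜] {ι κ : Type*} [Fintype ι] [Fintype κ]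
    {V : ι ⊕ κ → Type*} [∀ i, NormedAddCommGroup (V i)] [∀ i, NormedSpace 𝕜 (V i)]
    {F : Type*} [NormedAddCommGroup F] [NormedSpace 𝕜 F]

/-- Fix the second group of variables. -/
noncomputable def fixR (T : ContinuousMultilinearMap 𝕜 V F) (y : ∀ l, V (Sum.inr l)) :
    ContinuousMultilinearMap 𝕜 (fun i => V (Sum.inl i)) F :=
  MultilinearMap.mkContinuous
    { toFun := fun x => T (comb x y)
      map_update_add' := by
        classical
        intro _ x i a b
        simp only [comb_update_inl]
        exact T.map_update_add _ _ _ _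
      map_update_smul' := by
        classical
        intro _ x i a b
        simp only [comb_update_inl]
        exact T.map_update_smul _ _ _ _ }
    (‖T‖ * ∏ l, ‖y l‖) (by
      intro x
      refine (T.le_opNorm _).trans (le_of_eq ?_)
      rw [Fintype.prod_sum_type]
      simp only [comb]
      ring)

theorem fixR_apply (T : ContinuousMultilinearMap 𝕜 V F) (y : ∀ l, V (Sum.inr l))
    (x : ∀ i, V (Sum.inl i)) : fixR T y x = T (comb x y) := rfl

theorem norm_fixR_le (T : ContinuousMultilinearMap 𝕜 V F) (y : ∀ l, V (Sum.inr l)) :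
    ‖fixR T y‖ ≤ ‖T‖ * ∏ l, ‖y l‖ :=
  MultilinearMap.mkContinuous_norm_le _ (by positivity) _

/-- Fix the first group of variables. -/
noncomputable def fixL (T : ContinuousMultilinearMap 𝕜 V F) (x : ∀ i, V (Sum.inl i)) :
    MultilinearMap 𝕜 (fun l => V (Sum.inr l)) F where
  toFun := fun y => T (comb x y)
  map_update_add' := by
    classical
    intro _ y i a b
    simp only [comb_update_inr]
    exact T.map_update_add _ _ _ _
  map_update_smul' := by
    classical
    intro _ y i a b
    simp only [comb_update_inr]
    exact T.map_update_smul _ _ _ _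

theorem fixL_apply (T : ContinuousMultilinearMap 𝕜 V F) (y : ∀ l, V (Sum.inr l))
    (x : ∀ i, V (Sum.inl i)) : fixL T x y = T (comb x y) := rfl
end

theorem rademacher_bound {𝕜 : Type*} [RCLike 𝕜] {κ : Type*} [Fintype κ]
    {W : κ → Type*} [∀ i, NormedAddCommGroup (W i)] [∀ i, NormedSpace 𝕜 (W i)]
    {F : Type*} [NormedAddCommGroup F] [NormedSpace 𝕜 F]
    (M : MultilinearMap 𝕜 W F) {N : ℕ} (y : ∀ l, Fin N → W l) (j : Fin N) :
    ((2 : ℝ) ^ N) ^ Fintype.card κ * ‖M (fun l => y l j)‖ ≤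
      ∑ᶠ ε : κ → Fin N → Bool, ‖M (fun l => ∑ i, bsign 𝕜 (ε l i) • y l i)‖ := by
  classical
  rw [finsum_eq_sum_of_fintype]
  have h1 : M (fun l => (2 : 𝕜) ^ N • y l j)
      = ∑ ε : κ → Fin N → Bool,
        M (fun l => bsign 𝕜 (ε l j) • ∑ i, bsign 𝕜 (ε l i) • y l i) := by
    rw [← M.map_sum (fun l (ε : Fin N → Bool) => bsign 𝕜 (ε j) • ∑ i, bsign 𝕜 (ε i) • y l i)]
    congr 1
    funext l
    exact (sum_bsign_smul 𝕜 (y l) j).symm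
  have h2 : ‖M (fun l => (2 : 𝕜) ^ N • y l j)‖
      = ((2 : ℝ) ^ N) ^ Fintype.card κ * ‖M (fun l => y l j)‖ := by
    rw [M.map_smul_univ (fun _ => (2 : 𝕜) ^ N), norm_smul]
    simp
  rw [← h2, h1]
  refine (norm_sum_le _ _).trans (le_of_eq (Finset.sum_congr rfl fun ε _ => ?_))
  rw [M.map_smul_univ (fun l => bsign 𝕜 (ε l j)), norm_smul, norm_prod]
  simp [norm_bsign]

theorem extend_aux {𝕜 : Type*} [RCLike 𝕜] {ι κ : Type*} [Fintype ι] [Fintype κ]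
    {V : ι ⊕ κ → Type*} [∀ i, NormedAddCommGroup (V i)] [∀ i, NormedSpace 𝕜 (V i)]
    {F : Type*} [NormedAddCommGroup F] [NormedSpace 𝕜 F] [CompleteSpace F]
    {q : ι ⊕ κ → ℝ} (hq : ∀ l, q (Sum.inr l) = 1)
    (H : ∀ T : ContinuousMultilinearMap 𝕜 (fun i => V (Sum.inl i)) F,
      ∃ C, 0 ≤ C ∧ AbsSummingWith 𝕜 1 (fun i => q (Sum.inl i)) C ⇑T)
    (T : ContinuousMultilinearMap 𝕜 V F) : ∃ C, 0 ≤ C ∧ AbsSummingWith 𝕜 1 q C ⇑T := by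
  classical
  obtain ⟨K, hK, hu⟩ := uniform_summing H
  refine ⟨K * ‖T‖, by positivity, fun N x => ?_⟩
  simp only [Real.rpow_one, div_one]
  rw [Fintype.prod_sum_type]
  simp only [hq]
  set A := ∏ i, weakLpNorm 𝕜 (q (Sum.inl i)) (x (Sum.inl i)) with hA
  set B := ∏ l, weakLpNorm 𝕜 1 (x (Sum.inr l)) with hB
  have hA0 : 0 ≤ A := Finset.prod_nonneg fun i _ => weakLpNorm_nonneg' _ _ _
  let Y : (κ → Fin N → Bool) → ∀ l, V (Sum.inr l) := fun ε l =>
    ∑ i, bsign 𝕜 (ε l i) • x (Sum.inr l) i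
  have hY : ∀ ε, ∑ j, ‖T (comb (fun i => x (Sum.inl i) j) (Y ε))‖ ≤ K * (‖T‖ * B) * A := by
    intro ε
    refine (hu (fixR T (Y ε)) N (fun i => x (Sum.inl i))).trans ?_
    refine mul_le_mul_of_nonneg_right (mul_le_mul_of_nonneg_left ?_ hK) hA0
    refine (norm_fixR_le _ _).trans (mul_le_mul_of_nonneg_left ?_ (norm_nonneg _))
    exact Finset.prod_le_prod (fun _ _ => norm_nonneg _)
      fun l _ => norm_bsign_sum_le 𝕜 (x (Sum.inr l)) (ε l)
  have hc : (0 : ℝ) < ((2 : ℝ) ^ N) ^ Fintype.card κ := by positivity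
  refine le_of_mul_le_mul_left ?_ hc
  calc ((2 : ℝ) ^ N) ^ Fintype.card κ * ∑ j, ‖T (fun i => x i j)‖
      = ∑ j, ((2 : ℝ) ^ N) ^ Fintype.card κ *
          ‖fixL T (fun i => x (Sum.inl i) j) (fun l => x (Sum.inr l) j)‖ := by
        rw [Finset.mul_sum]
        refine Finset.sum_congr rfl fun j _ => ?_
        rw [fixL_apply]
        congr 3
        funext s
        cases s <;> rfl
    _ ≤ ∑ j, ∑ ε : κ → Fin N → Bool, ‖T (comb (fun i => x (Sum.inl i) j) (Y ε))‖ := by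
        refine Finset.sum_le_sum fun j _ => ?_
        refine (rademacher_bound (fixL T (fun i => x (Sum.inl i) j))
          (fun l => x (Sum.inr l)) j).trans (le_of_eq ?_)
        rw [finsum_eq_sum_of_fintype]
        rfl
    _ = ∑ ε : κ → Fin N → Bool, ∑ j, ‖T (comb (fun i => x (Sum.inl i) j) (Y ε))‖ :=
        Finset.sum_comm
    _ ≤ ∑ ε : κ → Fin N → Bool, K * (‖T‖ * B) * A := Finset.sum_le_sum fun ε _ => hY ε
    _ = ((2 : ℝ) ^ N) ^ Fintype.card κ * (K * ‖T‖ * (A * B)) := by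
        simp
        ring

/-- If every continuous `m`-linear map from `E₁ × ⋯ × E_m` into `F` is
absolutely `(1; q₁,…,q_m)`-summing, then for any further Banach spaces `G₁,…,G_k`, every
continuous `(m+k)`-linear map from `E₁ × ⋯ × E_m × G₁ × ⋯ × G_k` into `F` is absolutely
`(1; q₁,…,q_m,1,…,1)`-summing. -/
theorem absSumming_extend {𝕜 : Type v} [RCLike 𝕜] {m k : ℕ} (hm : 1 ≤ m) (hk : 1 ≤ k)
    {E : Fin m → Type u} [∀ i, NormedAddCommGroup (E i)] [∀ i, NormedSpace 𝕜 (E i)]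
    [∀ i, CompleteSpace (E i)]
    {F : Type*} [NormedAddCommGroup F] [NormedSpace 𝕜 F] [CompleteSpace F]
    {q : Fin m → ℝ} (hq : ∀ i, 1 ≤ q i)
    (H : ∀ T : ContinuousMultilinearMap 𝕜 E F, ∃ C, 0 ≤ C ∧ AbsSummingWith 𝕜 1 q C ⇑T) :
    ∀ (G : Fin k → Type u) [∀ j, NormedAddCommGroup (G j)] [∀ j, NormedSpace 𝕜 (G j)]
      [∀ j, CompleteSpace (G j)],
      letI : ∀ i : Fin m ⊕ Fin k, NormedAddCommGroup (Sum.elim E G i) := fun i =>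
        Sum.rec (motive := fun i => NormedAddCommGroup (Sum.elim E G i))
          (fun a => inferInstanceAs (NormedAddCommGroup (E a)))
          (fun b => inferInstanceAs (NormedAddCommGroup (G b))) i
      letI : ∀ i : Fin m ⊕ Fin k, NormedSpace 𝕜 (Sum.elim E G i) := fun i =>
        Sum.rec (motive := fun i => NormedSpace 𝕜 (Sum.elim E G i))
          (fun a => inferInstanceAs (NormedSpace 𝕜 (E a)))
          (fun b => inferInstanceAs (NormedSpace 𝕜 (G b))) i
      ∀ T : ContinuousMultilinearMap 𝕜 (Sum.elim E G) F,
        ∃ C, 0 ≤ C ∧ AbsSummingWith 𝕜 1 (Sum.elim q (fun _ => 1)) C ⇑T := by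
  intro G _ _ _
  letI : ∀ i : Fin m ⊕ Fin k, NormedAddCommGroup (Sum.elim E G i) := fun i =>
    Sum.rec (motive := fun i => NormedAddCommGroup (Sum.elim E G i))
      (fun a => inferInstanceAs (NormedAddCommGroup (E a)))
      (fun b => inferInstanceAs (NormedAddCommGroup (G b))) i
  letI : ∀ i : Fin m ⊕ Fin k, NormedSpace 𝕜 (Sum.elim E G i) := fun i =>
    Sum.rec (motive := fun i => NormedSpace 𝕜 (Sum.elim E G i))
      (fun a => inferInstanceAs (NormedSpace 𝕜 (E a)))
      (fun b => inferInstanceAs (NormedSpace 𝕜 (G b))) i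
  intro T
  exact extend_aux (V := Sum.elim E G) (q := Sum.elim q (fun _ => 1)) (fun _ => rfl) H T
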